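/- Let A be a Hopf algebra over a field k with antipode S and let X be a left Yetter–Drinfel'd module over A. Define θ_X : X → X by θ_X(x) = S(x_{(-1)})·x_{(0)}. Then: (1) θ_X(h·x) = S²(h)·θ_X(x) for all h ∈ A, x ∈ X; and (2) δ(θ_X(x)) = S²(x_{(-1)}) ⊗ θ_X(x_{(0)}) for all x ∈ X. -/

import Mathlib

open TensorProduct

noncomputable section

variable {k : Type*} [Field k]
variable {A : Type*} [Ring A] [HopfAlgebra k A]
variable {X Y Z : Type*} [AddCommGroup X] [Module k X] [AddCommGroup Y] [Module k Y]
  [AddCommGroup Z] [Module k Z]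

/-- LHS of the left Yetter–Drinfel'd compatibility condition, as a linear map
`A ⊗ X → A ⊗ X` sending `h ⊗ x` to `h₍₁₎x₍₋₁₎ ⊗ h₍₂₎ · x₍₀₎`. -/
def ydL (act : A ⊗[k] X →ₗ[k] X) (coact : X →ₗ[k] A ⊗[k] X) :
    A ⊗[k] X →ₗ[k] A ⊗[k] X :=
  TensorProduct.map (LinearMap.mul' k A) act
    ∘ₗ (TensorProduct.tensorTensorTensorComm k A A A X).toLinearMap
    ∘ₗ TensorProduct.map (Coalgebra.comul (R := k)) coact

/-- RHS of the left Yetter–Drinfel'd compatibility condition, sending `h ⊗ x` to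
`(h₍₁₎·x)₍₋₁₎ h₍₂₎ ⊗ (h₍₁₎·x)₍₀₎`. -/
def ydR (act : A ⊗[k] X →ₗ[k] X) (coact : X →ₗ[k] A ⊗[k] X) :
    A ⊗[k] X →ₗ[k] A ⊗[k] X :=
  TensorProduct.map (LinearMap.mul' k A) LinearMap.id
    ∘ₗ (TensorProduct.assoc k A A X).symm.toLinearMap
    ∘ₗ LinearMap.lTensor A (TensorProduct.comm k X A).toLinearMap
    ∘ₗ (TensorProduct.assoc k A X A).toLinearMap
    ∘ₗ LinearMap.rTensor A coact
    ∘ₗ LinearMap.rTensor A act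
    ∘ₗ (TensorProduct.assoc k A X A).symm.toLinearMap
    ∘ₗ LinearMap.lTensor A (TensorProduct.comm k A X).toLinearMap
    ∘ₗ (TensorProduct.assoc k A A X).toLinearMap
    ∘ₗ LinearMap.rTensor X (Coalgebra.comul (R := k))

/-- A left Yetter–Drinfel'd module structure over the Hopf algebra `A` on the
vector space `X`: a left action, a left coaction, and the compatibility. -/
structure IsYD (act : A ⊗[k] X →ₗ[k] X) (coact : X →ₗ[k] A ⊗[k] X) : Prop where
  act_one : ∀ x : X, act (1 ⊗ₜ[k] x) = x
  act_mul : ∀ (a a' : A) (x : X),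
    act ((a * a') ⊗ₜ[k] x) = act (a ⊗ₜ[k] act (a' ⊗ₜ[k] x))
  coassoc : (TensorProduct.assoc k A A X).toLinearMap
      ∘ₗ LinearMap.rTensor X (Coalgebra.comul (R := k)) ∘ₗ coact
      = LinearMap.lTensor A coact ∘ₗ coact
  counit_coact : (TensorProduct.lid k X).toLinearMap
      ∘ₗ LinearMap.rTensor X (Coalgebra.counit (R := k)) ∘ₗ coact = LinearMap.id
  yd : ydL act coact = ydR act coact

/-- The diagonal action `h · (x ⊗ y) = h₍₁₎·x ⊗ h₍₂₎·y` on a tensor product. -/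
def tAct (actX : A ⊗[k] X →ₗ[k] X) (actY : A ⊗[k] Y →ₗ[k] Y) :
    A ⊗[k] (X ⊗[k] Y) →ₗ[k] X ⊗[k] Y :=
  TensorProduct.map actX actY
    ∘ₗ (TensorProduct.tensorTensorTensorComm k A A X Y).toLinearMap
    ∘ₗ LinearMap.rTensor (X ⊗[k] Y) (Coalgebra.comul (R := k))

/-- The codiagonal coaction `x ⊗ y ↦ x₍₋₁₎y₍₋₁₎ ⊗ (x₍₀₎ ⊗ y₍₀₎)` on a tensor product. -/
def tCoact (coactX : X →ₗ[k] A ⊗[k] X) (coactY : Y →ₗ[k] A ⊗[k] Y) :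
    X ⊗[k] Y →ₗ[k] A ⊗[k] (X ⊗[k] Y) :=
  LinearMap.rTensor (X ⊗[k] Y) (LinearMap.mul' k A)
    ∘ₗ (TensorProduct.tensorTensorTensorComm k A X A Y).toLinearMap
    ∘ₗ TensorProduct.map coactX coactY

/-- The Yetter–Drinfel'd braiding `c_{X,Y} : x ⊗ y ↦ x₍₋₁₎ · y ⊗ x₍₀₎`. -/
def ydBraid (coactX : X →ₗ[k] A ⊗[k] X) (actY : A ⊗[k] Y →ₗ[k] Y) :
    X ⊗[k] Y →ₗ[k] Y ⊗[k] X :=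
  LinearMap.rTensor X actY
    ∘ₗ (TensorProduct.assoc k A Y X).symm.toLinearMap
    ∘ₗ LinearMap.lTensor A (TensorProduct.comm k X Y).toLinearMap
    ∘ₗ (TensorProduct.assoc k A X Y).toLinearMap
    ∘ₗ LinearMap.rTensor Y coactX

/-- The map `θ_X : x ↦ S(x₍₋₁₎) · x₍₀₎`. -/
def ydTheta (act : A ⊗[k] X →ₗ[k] X) (coact : X →ₗ[k] A ⊗[k] X) : X →ₗ[k] X :=
  act ∘ₗ LinearMap.rTensor X (HopfAlgebra.antipode (R := k)) ∘ₗ coact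

/-!
Both claims are of the form `g = S² * f` for a convolution along the comultiplication or the
coaction, and `S²` is the convolution inverse of `S` for the opposite product: `S²(h₍₂₎) S(h₍₁₎)`
and `S(h₍₂₎) S²(h₍₁₎)` are both `ε(h) 1`. So it suffices to prove `S * g = f`, which reads
`S(h₍₂₎) · θ(h₍₁₎ · x) = ε(h) θ(x)` in (1) and `δ(θ(x₍₀₎)) (S(x₍₋₁₎) ⊗ 1) = 1 ⊗ θ(x)` in (2). The
former follows by applying `a ⊗ y ↦ S(a) · y` to the compatibility condition at `h`, the latter
from the compatibility condition at `S(x₍₋₁₎)`, since `S` reverses the comultiplication.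
-/

open Coalgebra HopfAlgebra
open LinearMap hiding id
open scoped WithConv
open WithConv (toConv)

section Comodule

variable {R C V M N P : Type*} [CommSemiring R] [AddCommMonoid C] [Module R C]
  [AddCommMonoid V] [Module R V] [AddCommMonoid M] [Module R M] [AddCommMonoid N] [Module R N]
  [AddCommMonoid P] [Module R P]

/-- The convolution `v ↦ f(v₍₋₁₎)(g(v₍₀₎))` of an operator-valued map on `C` with a map on `V`,
along a map `δ : V → C ⊗ V`; no comodule axioms are built in. -/
def coactConv (δ : V →ₗ[R] C ⊗[R] V) (f : C →ₗ[R] M →ₗ[R] N) (g : V →ₗ[R] M) : V →ₗ[R] N :=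
  TensorProduct.lift (f.compl₂ g) ∘ₗ δ

lemma comp_coactConv (δ : V →ₗ[R] C ⊗[R] V) (u : N →ₗ[R] P) (f : C →ₗ[R] M →ₗ[R] N)
    (g : V →ₗ[R] M) : u ∘ₗ coactConv δ f g = coactConv δ (f.compr₂ u) g := by
  rw [coactConv, coactConv, ← comp_assoc, ← TensorProduct.lift_compr₂]
  rfl

lemma coactConv_compl₂ (δ : V →ₗ[R] C ⊗[R] V) (f : C →ₗ[R] N →ₗ[R] P) (u : M →ₗ[R] N)
    (g : V →ₗ[R] M) : coactConv δ (f.compl₂ u) g = coactConv δ f (u ∘ₗ g) := rfl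

section CoalgebraStruct

variable [CoalgebraStruct R C]

/-- The convolution `c ↦ f(c₍₁₎) ∘ g(c₍₂₎)` of operator-valued maps on a coalgebra. On
`Module.End`-valued maps it is the convolution product of `WithConv`, which does not allow
distinct sources and targets. -/
def convComp (f : C →ₗ[R] N →ₗ[R] P) (g : C →ₗ[R] M →ₗ[R] N) : C →ₗ[R] M →ₗ[R] P :=
  TensorProduct.lift ((llcomp R M N P).compl₁₂ f g) ∘ₗ comul

lemma convComp_apply {ι : Type*} {c : C} (𝓡 : Coalgebra.Repr R c ι)
    (f : C →ₗ[R] N →ₗ[R] P) (g : C →ₗ[R] M →ₗ[R] N) :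
    convComp f g c = ∑ i ∈ 𝓡.index, f (𝓡.left i) ∘ₗ g (𝓡.right i) := by
  simp [convComp, ← 𝓡.eq, llcomp_apply']

lemma convComp_eq_convMul (f g : C →ₗ[R] Module.End R M) :
    convComp f g = (toConv f * toConv g).ofConv := by
  ext c : 1
  rw [convComp_apply (ℛ R c), (ℛ R c).convMul_apply]
  rfl

lemma coactConv_coactConv {δ : V →ₗ[R] C ⊗[R] V}
    (hδ : (TensorProduct.assoc R C C V).toLinearMap ∘ₗ rTensor V comul ∘ₗ δ = lTensor C δ ∘ₗ δ)
    (f : C →ₗ[R] N →ₗ[R] P) (g : C →ₗ[R] M →ₗ[R] N) (h : V →ₗ[R] M) :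
    coactConv δ f (coactConv δ g h) = coactConv δ (convComp f g) h := by
  let Φ : C ⊗[R] (C ⊗[R] V) →ₗ[R] P :=
    TensorProduct.lift (f.compl₂ (TensorProduct.lift (g.compl₂ h)))
  have hl : Φ ∘ₗ lTensor C δ = TensorProduct.lift (f.compl₂ (coactConv δ g h)) := by
    ext; rfl
  have hr : Φ ∘ₗ (TensorProduct.assoc R C C V).toLinearMap ∘ₗ rTensor V comul =
      TensorProduct.lift ((convComp f g).compl₂ h) := by
    ext c v
    simp [Φ, convComp_apply (ℛ R c), ← (ℛ R c).eq, TensorProduct.sum_tmul]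
  rw [coactConv, ← hl, comp_assoc, ← hδ, coactConv, ← hr]
  rfl

end CoalgebraStruct

variable [Coalgebra R C] {δ : V →ₗ[R] C ⊗[R] V}

lemma one_coactConv (hδ : (TensorProduct.lid R V).toLinearMap ∘ₗ rTensor V counit ∘ₗ δ = .id)
    (g : V →ₗ[R] M) :
    coactConv δ (1 : WithConv (C →ₗ[R] Module.End R M)).ofConv g = g := by
  have hlift : TensorProduct.lift
      ((1 : WithConv (C →ₗ[R] Module.End R M)).ofConv.compl₂ g) =
        g ∘ₗ (TensorProduct.lid R V).toLinearMap ∘ₗ rTensor V counit := by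
    ext c v
    simp
  rw [coactConv, hlift, comp_assoc, comp_assoc, hδ, comp_id]

lemma coactConv_coactConv_of_convMul_eq_one
    (hδ : (TensorProduct.assoc R C C V).toLinearMap ∘ₗ rTensor V comul ∘ₗ δ = lTensor C δ ∘ₗ δ)
    (hε : (TensorProduct.lid R V).toLinearMap ∘ₗ rTensor V counit ∘ₗ δ = .id)
    {f g : C →ₗ[R] Module.End R M} (hfg : toConv f * toConv g = 1) (h : V →ₗ[R] M) :
    coactConv δ f (coactConv δ g h) = h := by
  rw [coactConv_coactConv hδ, convComp_eq_convMul, hfg, one_coactConv hε]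

end Comodule

lemma counit_smulRight_convMul {R C B : Type*} [CommSemiring R] [AddCommMonoid C] [Module R C]
    [Coalgebra R C] [Semiring B] [Algebra R B] (b : B) (g : C →ₗ[R] B) :
    toConv (counit.smulRight b) * toConv g = toConv (mulLeft R b ∘ₗ g) := by
  ext c
  rw [(ℛ R c).convMul_apply]
  conv_rhs => rw [← sum_counit_smul (ℛ R c)]
  simp

section HopfAlgebra

variable {R H B V : Type*} [CommSemiring R] [Semiring H] [HopfAlgebra R H] [Semiring B]
  [Algebra R B] [AddCommMonoid V] [Module R V]

lemma algHom_comp_antipode_convMul (f : H →ₐ[R] B) :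
    toConv (f.toLinearMap ∘ₗ antipode R) * toConv f.toLinearMap = 1 := by
  have h := algHom_comp_convMul_distrib f (toConv (antipode R)) (toConv .id)
  rw [antipode_mul_id] at h
  apply WithConv.ofConv_injective
  exact h.symm.trans (by ext; simp)

lemma algHom_convMul_comp_antipode (f : H →ₐ[R] B) :
    toConv f.toLinearMap * toConv (f.toLinearMap ∘ₗ antipode R) = 1 := by
  have h := algHom_comp_convMul_distrib f (toConv .id) (toConv (antipode R))
  rw [id_mul_antipode] at h
  apply WithConv.ofConv_injective
  exact h.symm.trans (by ext; simp)

-- `comul` is the convolution product `(a ↦ a ⊗ 1) * (a ↦ 1 ⊗ a)`, so its convolution inverse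
-- `comul ∘ S` is the product of the inverses in the opposite order.
lemma comul_antipode (a : H) :
    comul (R := R) (antipode R a) =
      TensorProduct.map (antipode R) (antipode R) (TensorProduct.comm R H H (comul a)) := by
  let i₁ : H →ₐ[R] H ⊗[R] H := Algebra.TensorProduct.includeLeft
  let i₂ : H →ₐ[R] H ⊗[R] H := Algebra.TensorProduct.includeRight
  have hcomul : toConv i₁.toLinearMap * toConv i₂.toLinearMap = toConv (comul (R := R)) := by
    ext c
    rw [(ℛ R c).convMul_apply]
    simp [i₁, i₂, (ℛ R c).eq]
  have hinv : toConv (i₂.toLinearMap ∘ₗ antipode R) * toConv (i₁.toLinearMap ∘ₗ antipode R) *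
      toConv (comul (R := R)) = 1 := by
    rw [← hcomul, mul_assoc, ← mul_assoc _ (toConv i₁.toLinearMap),
      algHom_comp_antipode_convMul, one_mul, algHom_comp_antipode_convMul]
  have h := congrArg (· a) (left_inv_eq_right_inv hinv comul_right_inv)
  rw [(ℛ R a).convMul_apply] at h
  conv_rhs => rw [← (ℛ R a).eq]
  simpa [i₁, i₂] using h.symm

/-- A Sweedler representation of `Δ(a)` gives one of `Δ(S(a))`, with the factors exchanged. -/
def antipodeRepr {ι : Type*} {a : H} (𝓡 : Coalgebra.Repr R a ι) :
    Coalgebra.Repr R (antipode R a) ι where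
  index := 𝓡.index
  left i := antipode R (𝓡.right i)
  right i := antipode R (𝓡.left i)
  eq := by simp [comul_antipode, ← 𝓡.eq]

variable (R H V) in
/-- Left multiplication on the first factor of `H ⊗ V`. -/
def lmulTensor : H →ₐ[R] Module.End R (H ⊗[R] V) :=
  (Module.End.rTensorAlgHom R H V).comp (Algebra.lmul R H)

variable (R H V) in
/-- The action `a ↦ (b ⊗ v ↦ b * S(a) ⊗ v)`, a homomorphism because `S` reverses products. -/
def antipodeRMulTensor : H →ₐ[R] Module.End R (H ⊗[R] V) :=
  (Module.End.rTensorAlgHom R H V).comp ((Algebra.lsmul R R H).comp (antipodeAlgHomOp R H))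

end HopfAlgebra

section Compatibility

variable {act : A ⊗[k] X →ₗ[k] X} {coact : X →ₗ[k] A ⊗[k] X}

lemma ydL_tmul {ι : Type*} {h : A} (𝓡 : Coalgebra.Repr k h ι) (x : X) :
    ydL act coact (h ⊗ₜ[k] x) = ∑ i ∈ 𝓡.index,
      TensorProduct.map (mulLeft k (𝓡.left i)) (TensorProduct.curry act (𝓡.right i))
        (coact x) := by
  have hpure (a b : A) (t : A ⊗[k] X) :
      TensorProduct.map (mul' k A) act
        (TensorProduct.tensorTensorTensorComm k A A A X ((a ⊗ₜ[k] b) ⊗ₜ[k] t)) =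
      TensorProduct.map (mulLeft k a) (TensorProduct.curry act b) t := by
    induction t with
    | zero => simp
    | add u v hu hv => simp only [TensorProduct.tmul_add, map_add, hu, hv]
    | tmul u v => simp
  simp [ydL, ← 𝓡.eq, TensorProduct.sum_tmul, hpure]

lemma ydR_tmul {ι : Type*} {h : A} (𝓡 : Coalgebra.Repr k h ι) (x : X) :
    ydR act coact (h ⊗ₜ[k] x) = ∑ i ∈ 𝓡.index,
      rTensor X (mulRight k (𝓡.right i)) (coact (act (𝓡.left i ⊗ₜ[k] x))) := by
  have hpure (b : A) (t : A ⊗[k] X) :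
      TensorProduct.map (mul' k A) .id ((TensorProduct.assoc k A A X).symm
        (lTensor A (TensorProduct.comm k X A).toLinearMap
          (TensorProduct.assoc k A X A (t ⊗ₜ[k] b)))) =
      rTensor X (mulRight k b) t := by
    induction t with
    | zero => simp
    | add u v hu hv => simp only [TensorProduct.add_tmul, map_add, hu, hv]
    | tmul u v => simp
  simp [ydR, ← 𝓡.eq, TensorProduct.sum_tmul, hpure]

end Compatibility

namespace IsYD

variable {act : A ⊗[k] X →ₗ[k] X} {coact : X →ₗ[k] A ⊗[k] X}

/-- The action of a Yetter–Drinfel'd module, as an algebra homomorphism into its endomorphisms. -/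
def actHom (hX : IsYD act coact) : A →ₐ[k] Module.End k X :=
  .ofLinearMap (TensorProduct.curry act) (LinearMap.ext hX.act_one)
    fun a b ↦ LinearMap.ext (hX.act_mul a b)

lemma actHom_apply (hX : IsYD act coact) (a : A) (x : X) : hX.actHom a x = act (a ⊗ₜ[k] x) := rfl

lemma sum_map_mulLeft_act_coact (hX : IsYD act coact) {ι : Type*} {h : A}
    (𝓡 : Coalgebra.Repr k h ι) (x : X) :
    ∑ i ∈ 𝓡.index,
        TensorProduct.map (mulLeft k (𝓡.left i)) (hX.actHom (𝓡.right i)) (coact x) =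
      ∑ i ∈ 𝓡.index, rTensor X (mulRight k (𝓡.right i)) (coact (hX.actHom (𝓡.left i) x)) := by
  have h_yd := LinearMap.congr_fun hX.yd (h ⊗ₜ[k] x)
  rwa [ydL_tmul 𝓡, ydR_tmul 𝓡] at h_yd

lemma ydTheta_eq_coactConv (hX : IsYD act coact) :
    ydTheta act coact = coactConv coact (hX.actHom.toLinearMap ∘ₗ antipode k) .id := by
  have hlift : act ∘ₗ rTensor X (antipode k) =
      TensorProduct.lift ((hX.actHom.toLinearMap ∘ₗ antipode k).compl₂ .id) := by
    ext; rfl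
  rw [ydTheta, ← comp_assoc, hlift, coactConv]

-- Applying `a ⊗ y ↦ S(a) · y` to the compatibility condition, where `S(h₍₁₎a)h₍₂₎ = ε(h) S(a)`.
lemma sum_act_antipode_ydTheta_act (hX : IsYD act coact) {ι : Type*} {h : A}
    (𝓡 : Coalgebra.Repr k h ι) :
    ∑ i ∈ 𝓡.index, hX.actHom (antipode k (𝓡.right i)) ∘ₗ ydTheta act coact ∘ₗ
      hX.actHom (𝓡.left i) = counit (R := k) h • ydTheta act coact := by
  let m : A ⊗[k] X →ₗ[k] X := act ∘ₗ rTensor X (antipode k)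
  have hleft : ∑ i ∈ 𝓡.index,
      m ∘ₗ TensorProduct.map (mulLeft k (𝓡.left i)) (hX.actHom (𝓡.right i)) =
        counit (R := k) h • m := by
    ext a x
    have hcancel := congr(hX.actHom (antipode k a) (hX.actHom $(sum_antipode_mul_eq_smul 𝓡) x))
    simpa [m, antipode_mul_antidistrib, ← actHom_apply hX] using hcancel
  have hright (b : A) (t : A ⊗[k] X) :
      hX.actHom (antipode k b) (m t) = m (rTensor X (mulRight k b) t) := by
    induction t with
    | zero => simp
    | add u v hu hv => simp only [map_add, hu, hv]
    | tmul a x => simp [m, antipode_mul_antidistrib, ← actHom_apply hX]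
  ext x
  calc
    _ = m (∑ i ∈ 𝓡.index,
          rTensor X (mulRight k (𝓡.right i)) (coact (hX.actHom (𝓡.left i) x))) := by
      simp only [map_sum, ← hright, LinearMap.sum_apply]
      rfl
    _ = (∑ i ∈ 𝓡.index,
          m ∘ₗ TensorProduct.map (mulLeft k (𝓡.left i)) (hX.actHom (𝓡.right i))) (coact x) := by
      simp only [← hX.sum_map_mulLeft_act_coact, map_sum, LinearMap.sum_apply, comp_apply]
    _ = (counit (R := k) h • ydTheta act coact) x := by
      rw [hleft]
      rfl

theorem ydTheta_act (hX : IsYD act coact) (h : A) (x : X) :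
    ydTheta act coact (act (h ⊗ₜ[k] x)) =
      act (antipode k (antipode k h) ⊗ₜ[k] ydTheta act coact x) := by
  let θ : Module.End k X := ydTheta act coact
  let T : A →ₗ[k] (Module.End k X)ᵐᵒᵖ :=
    (MulOpposite.opLinearEquiv k).toLinearMap ∘ₗ mulLeft k θ ∘ₗ hX.actHom.toLinearMap
  let F : A →ₐ[k] (Module.End k X)ᵐᵒᵖ := hX.actHom.op.comp (antipodeAlgHomOp k A)
  have hTF : toConv T * toConv F.toLinearMap = toConv (counit.smulRight (MulOpposite.op θ)) := by
    ext c : 2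
    rw [(ℛ k c).convMul_apply]
    apply MulOpposite.unop_injective
    simpa [T, F] using! hX.sum_act_antipode_ydTheta_act (ℛ k c)
  have hT : toConv T = toConv (mulLeft k (MulOpposite.op θ) ∘ₗ F.toLinearMap ∘ₗ antipode k) := by
    rw [← counit_smulRight_convMul, ← hTF, mul_assoc, algHom_convMul_comp_antipode, mul_one]
  exact congr(($hT h).unop x)

lemma coactConv_antipode_coact (hX : IsYD act coact) :
    coactConv coact ((lmulTensor k A X).toLinearMap ∘ₗ antipode k) coact =
      TensorProduct.mk k A X 1 := by
  have hlift : TensorProduct.lift ((lmulTensor k A X).toLinearMap.compl₂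
      (TensorProduct.mk k A X 1)) = .id := by
    ext a x
    exact congr($(mul_one a) ⊗ₜ[k] x)
  have hcoact : coactConv coact (lmulTensor k A X).toLinearMap (TensorProduct.mk k A X 1) =
      coact := by
    rw [coactConv, hlift, id_comp]
  have hcancel := coactConv_coactConv_of_convMul_eq_one hX.coassoc hX.counit_coact
    (algHom_comp_antipode_convMul (lmulTensor k A X)) (TensorProduct.mk k A X 1)
  rwa [hcoact] at hcancel

-- The compatibility condition at `S(a)`, where `Δ(S(a)) = S(a₍₂₎) ⊗ S(a₍₁₎)`.
lemma convComp_antipode (hX : IsYD act coact) :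
    convComp (antipodeRMulTensor k A X).toLinearMap
        ((hX.actHom.toLinearMap ∘ₗ antipode k).compr₂ coact) =
      convComp ((Module.End.lTensorAlgHom k X A).toLinearMap ∘ₗ hX.actHom.toLinearMap ∘ₗ antipode k)
        (((lmulTensor k A X).toLinearMap ∘ₗ antipode k).compl₂ coact) := by
  have hmap (a b : A) : lTensor A (hX.actHom b) ∘ₗ lmulTensor k A X a =
      TensorProduct.map (mulLeft k a) (hX.actHom b) := by
    ext; rfl
  ext a x
  rw [convComp_apply (ℛ k a), convComp_apply (ℛ k a), LinearMap.sum_apply, LinearMap.sum_apply]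
  refine (hX.sum_map_mulLeft_act_coact (antipodeRepr (ℛ k a)) x).symm.trans ?_
  simp only [← hmap]
  rfl

lemma coactConv_coact_ydTheta (hX : IsYD act coact) :
    coactConv coact (antipodeRMulTensor k A X).toLinearMap (coact ∘ₗ ydTheta act coact) =
      TensorProduct.mk k A X 1 ∘ₗ ydTheta act coact := by
  let ρS : A →ₗ[k] Module.End k X := hX.actHom.toLinearMap ∘ₗ antipode k
  let L : A →ₗ[k] Module.End k (A ⊗[k] X) := (lmulTensor k A X).toLinearMap ∘ₗ antipode k
  let R : A →ₗ[k] Module.End k (A ⊗[k] X) := (antipodeRMulTensor k A X).toLinearMap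
  let ρS' : A →ₗ[k] Module.End k (A ⊗[k] X) := (Module.End.lTensorAlgHom k X A).toLinearMap ∘ₗ ρS
  calc
    _ = coactConv coact (convComp R (ρS.compr₂ coact)) .id := by
      rw [hX.ydTheta_eq_coactConv, comp_coactConv, coactConv_coactConv hX.coassoc]
    _ = coactConv coact (convComp ρS' (L.compl₂ coact)) .id := by
      rw [hX.convComp_antipode]
    _ = coactConv coact ρS' (coactConv coact L coact) := by
      rw [← coactConv_coactConv hX.coassoc, coactConv_compl₂, comp_id]
    _ = coactConv coact ρS' (TensorProduct.mk k A X 1) := by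
      rw [hX.coactConv_antipode_coact]
    _ = TensorProduct.mk k A X 1 ∘ₗ ydTheta act coact := by
      rw [hX.ydTheta_eq_coactConv, comp_coactConv]
      rfl

theorem coact_ydTheta (hX : IsYD act coact) (x : X) :
    coact (ydTheta act coact x) =
      rTensor X (antipode k (A := A) ∘ₗ antipode k)
        (lTensor A (ydTheta act coact) (coact x)) := by
  let R : A →ₐ[k] Module.End k (A ⊗[k] X) := antipodeRMulTensor k A X
  have hlift (θ : X →ₗ[k] X) : TensorProduct.lift ((R.toLinearMap ∘ₗ antipode k).compl₂
      (TensorProduct.mk k A X 1 ∘ₗ θ)) =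
        rTensor X (antipode k (A := A) ∘ₗ antipode k) ∘ₗ lTensor A θ := by
    ext a y
    exact congr($(one_mul (antipode k (antipode k a))) ⊗ₜ[k] θ y)
  have hconv : coact ∘ₗ ydTheta act coact = coactConv coact (R.toLinearMap ∘ₗ antipode k)
      (TensorProduct.mk k A X 1 ∘ₗ ydTheta act coact) := by
    rw [← hX.coactConv_coact_ydTheta]
    exact (coactConv_coactConv_of_convMul_eq_one hX.coassoc hX.counit_coact
      (algHom_comp_antipode_convMul R) _).symm
  rw [coactConv, hlift] at hconv
  exact LinearMap.congr_fun hconv x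

end IsYD

/-- For a left Yetter–Drinfel'd module `X` over a Hopf algebra `A`,
the map `θ_X(x) = S(x₍₋₁₎)·x₍₀₎` satisfies `θ_X(h·x) = S²(h)·θ_X(x)` and
`δ(θ_X(x)) = S²(x₍₋₁₎) ⊗ θ_X(x₍₀₎)`. -/
theorem ydTheta_properties (act : A ⊗[k] X →ₗ[k] X) (coact : X →ₗ[k] A ⊗[k] X)
    (hX : IsYD act coact) :
    (∀ (h : A) (x : X),
      ydTheta act coact (act (h ⊗ₜ[k] x))
        = act ((HopfAlgebra.antipode (R := k) (HopfAlgebra.antipode (R := k) h))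
            ⊗ₜ[k] ydTheta act coact x))
    ∧ (∀ x : X,
      coact (ydTheta act coact x)
        = LinearMap.rTensor X
            ((HopfAlgebra.antipode (R := k) (A := A)) ∘ₗ HopfAlgebra.antipode (R := k))
            (LinearMap.lTensor A (ydTheta act coact) (coact x))) :=
  ⟨hX.ydTheta_act, hX.coact_ydTheta⟩

end
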